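/- Let ⟨W,<⟩ be a strict linear order containing an infinite ascending chain of pairwise distinct elements of W, let ≤ be the reflexive closure of <, and let R be a binary relation on W with < ⊆ R ⊆ ≤. Let L be any set of first-order modal formulas with L(W,R) ⊆ L ⊆ L_c(W,R). Then ¬B⁺ ∈ L if and only if there is no function f : ℕ×ℕ → T satisfying (T1) and (T2). -/

import Mathlib

namespace FOML

/-- First-order modal formulas over a signature assigning to each arity `n` a type
`Pred n` of `n`-ary predicate letters; individual variables are indexed by `ℕ`.
(0-ary predicate letters are proposition letters.) -/
inductive Fml (Pred : ℕ → Type) : Type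
  | atom : {n : ℕ} → Pred n → (Fin n → ℕ) → Fml Pred
  | bot  : Fml Pred
  | imp  : Fml Pred → Fml Pred → Fml Pred
  | box  : Fml Pred → Fml Pred
  | all  : ℕ → Fml Pred → Fml Pred

namespace Fml

variable {Pred : ℕ → Type}

def neg (φ : Fml Pred) : Fml Pred := imp φ bot
def top : Fml Pred := neg bot
def and (φ ψ : Fml Pred) : Fml Pred := neg (imp φ (neg ψ))
def or (φ ψ : Fml Pred) : Fml Pred := imp (neg φ) ψ
def iff (φ ψ : Fml Pred) : Fml Pred := and (imp φ ψ) (imp ψ φ)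
def dia (φ : Fml Pred) : Fml Pred := neg (box (neg φ))
def ex (x : ℕ) (φ : Fml Pred) : Fml Pred := neg (all x (neg φ))

def bigAnd : List (Fml Pred) → Fml Pred
  | [] => top
  | φ :: l => and φ (bigAnd l)

def bigOr : List (Fml Pred) → Fml Pred
  | [] => bot
  | φ :: l => or φ (bigOr l)

/-- Iterated box: `□⁰φ = φ`, `□ⁿ⁺¹φ = □□ⁿφ`. -/
def boxN : ℕ → Fml Pred → Fml Pred
  | 0, φ => φ
  | n + 1, φ => box (boxN n φ)

/-- Replace every occurrence of `□` by `□⁺`, where `□⁺ψ = ψ ∧ □ψ`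
(equivalently, every `◇` by its dual `◇⁺ψ = ◇ψ ∨ ψ`). -/
def plus : Fml Pred → Fml Pred
  | atom P a => atom P a
  | bot => bot
  | imp φ ψ => imp (plus φ) (plus ψ)
  | box φ => and (plus φ) (box (plus φ))
  | all x φ => all x (plus φ)

end Fml

/-- A Kripke model with expanding domains based on the frame `⟨W, R⟩`:
a domain function `D` into nonempty subsets of the domain `Dom`, expanding along `R`,
and an interpretation `I` of predicate letters at each world, with
`I(w,P) ⊆ D(w)ⁿ` for `n`-ary `P`. -/
structure KModel (W : Type*) (R : W → W → Prop) (Pred : ℕ → Type) where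
  Dom : Type
  D : W → Set Dom
  D_ne : ∀ w, (D w).Nonempty
  D_mono : ∀ ⦃w v : W⦄, R w v → D w ⊆ D v
  I : W → (n : ℕ) → Pred n → (Fin n → Dom) → Prop
  I_dom : ∀ (w : W) (n : ℕ) (P : Pred n) (as : Fin n → Dom), I w n P as → ∀ i, as i ∈ D w

variable {W : Type*} {R : W → W → Prop} {Pred : ℕ → Type}

/-- Truth of a formula at a world of a Kripke model under an assignment. -/
def truth (M : KModel W R Pred) : Fml Pred → W → (ℕ → M.Dom) → Prop
  | .atom (n := n) P args, w, g => M.I w n P (fun i => g (args i))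
  | .bot, _, _ => False
  | .imp φ ψ, w, g => truth M φ w g → truth M ψ w g
  | .box φ, w, g => ∀ v : W, R w v → truth M φ v g
  | .all x φ, w, g => ∀ d ∈ M.D w, truth M φ w (Function.update g x d)

/-- A formula is true at a world `w` if it is true under every assignment
taking values in the domain of `w`. -/
def trueAt (M : KModel W R Pred) (w : W) (φ : Fml Pred) : Prop :=
  ∀ g : ℕ → M.Dom, (∀ x, g x ∈ M.D w) → truth M φ w g

/-- `φ ∈ L(W,R)`: validity on the frame `⟨W,R⟩` (truth in every model with
expanding domains based on it, at every world). -/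
def ValidOn (R : W → W → Prop) (φ : Fml Pred) : Prop :=
  ∀ (M : KModel W R Pred) (w : W), trueAt M w φ

/-- The model has (globally) constant domains. -/
def ConstDom (M : KModel W R Pred) : Prop := ∀ w v : W, M.D w = M.D v

/-- `φ ∈ L_c(W,R)`: truth in every model with constant domains based on `⟨W,R⟩`. -/
def ValidOnC (R : W → W → Prop) (φ : Fml Pred) : Prop :=
  ∀ (M : KModel W R Pred), ConstDom M → ∀ w : W, trueAt M w φ

/-- A finite set `T = {t₀, …, t_s}` of tile types (represented as `Fin (s+1)`, with
`t₀ = 0`), each with four edge colours. -/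
structure TileSet where
  s : ℕ
  left : Fin (s + 1) → ℕ
  right : Fin (s + 1) → ℕ
  up : Fin (s + 1) → ℕ
  down : Fin (s + 1) → ℕ

namespace TileSet

/-- (T1): colours match horizontally. -/
def T1 (ts : TileSet) (f : ℕ → ℕ → Fin (ts.s + 1)) : Prop :=
  ∀ n m : ℕ, ts.right (f n m) = ts.left (f (n + 1) m)

/-- (T2): colours match vertically. -/
def T2 (ts : TileSet) (f : ℕ → ℕ → Fin (ts.s + 1)) : Prop :=
  ∀ n m : ℕ, ts.up (f n m) = ts.down (f n (m + 1))

/-- (T3): the tile type `t₀` occurs infinitely often in the leftmost column. -/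
def T3 (ts : TileSet) (f : ℕ → ℕ → Fin (ts.s + 1)) : Prop :=
  {m : ℕ | f 0 m = 0}.Infinite

end TileSet

/-- The predicate letters used in the encoding: a binary letter `◁`; monadic letters
`M`, `P₀, …, P_{s+2}` and `P`; proposition letters `p` and `q`. -/
inductive Letter (s : ℕ) : ℕ → Type
  | lt : Letter s 2
  | M : Letter s 1
  | P : Fin (s + 3) → Letter s 1
  | Pm : Letter s 1
  | p : Letter s 0
  | q : Letter s 0

namespace Enc

/-- Formulas in the language of the encoding. -/
abbrev F (ts : TileSet) := Fml (Letter ts.s)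

/-- The list of all tile types. -/
def tiles (ts : TileSet) : List (Fin (ts.s + 1)) := List.finRange (ts.s + 1)

/-- Tile indices regarded as indices of the letters `P₀, …, P_{s+2}`. -/
def tl (ts : TileSet) (t : Fin (ts.s + 1)) : Fin (ts.s + 3) := ⟨t.1, by omega⟩

def pp (ts : TileSet) : F ts := .atom Letter.p Fin.elim0
def qq (ts : TileSet) : F ts := .atom Letter.q Fin.elim0
def Mx (ts : TileSet) (v : ℕ) : F ts := .atom Letter.M (fun _ => v)
def Px (ts : TileSet) (j : Fin (ts.s + 3)) (v : ℕ) : F ts := .atom (Letter.P j) (fun _ => v)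
def PP (ts : TileSet) (v : ℕ) : F ts := .atom Letter.Pm (fun _ => v)
def ltA (ts : TileSet) (v w : ℕ) : F ts := .atom Letter.lt ![v, w]

/-- `⟐φ = ◇(π ∧ ◇(¬π ∧ φ))`, for a "marker" formula `π` (the paper uses `π = p`,
and `π = ∀x P(x)` for the operator `⊡`). -/
def pdia (ts : TileSet) (π φ : F ts) : F ts := .dia (.and π (.dia (.and (.neg π) φ)))

/-- Iterated `⟐`. -/
def pdiaN (ts : TileSet) (π : F ts) : ℕ → F ts → F ts
  | 0, φ => φ
  | n + 1, φ => pdia ts π (pdiaN ts π n φ)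

/-- `U(x) = ⋀_{t ∈ T} ¬P_t(x)`, with the tile letters given by `Pf`. -/
def Ug (ts : TileSet) (Pf : Fin (ts.s + 1) → ℕ → F ts) (v : ℕ) : F ts :=
  .bigAnd ((tiles ts).map (fun t => .neg (Pf t v)))

/- The conjuncts of the formula `A`, parametrised by the formulas standing for
`x ◁ y` (`rel`), `M(x)` (`Mf`), `P_t(x)` (`Pf`) and `p` (`pf`); the individual
variables `x`, `y` are `0`, `1`. -/

/-- `A₀ = ∃x □U(x)` -/
def A0g (ts : TileSet) (Pf : Fin (ts.s + 1) → ℕ → F ts) : F ts :=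
  .ex 0 (.box (Ug ts Pf 0))

/-- `A₁ = ∃x(¬U(x) ∧ M(x))` -/
def A1g (ts : TileSet) (Mf : ℕ → F ts) (Pf : Fin (ts.s + 1) → ℕ → F ts) : F ts :=
  .ex 0 (.and (.neg (Ug ts Pf 0)) (Mf 0))

/-- `A₂ = ∀x∃y (x ◁ y)` -/
def A2g (ts : TileSet) (rel : ℕ → ℕ → F ts) : F ts := .all 0 (.ex 1 (rel 0 1))

/-- `A₃ = ∀x∀y(x◁y → □(∃x M(x) → x◁y))` -/
def A3g (ts : TileSet) (rel : ℕ → ℕ → F ts) (Mf : ℕ → F ts) : F ts :=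
  .all 0 (.all 1 (.imp (rel 0 1) (.box (.imp (.ex 0 (Mf 0)) (rel 0 1)))))

/-- `A₄ = ∀x∀y(x◁y → □(M(x) ↔ ¬p ∧ ⟐M(y) ∧ ¬⟐²M(y)))` -/
def A4g (ts : TileSet) (rel : ℕ → ℕ → F ts) (Mf : ℕ → F ts) (pf : F ts) : F ts :=
  .all 0 (.all 1 (.imp (rel 0 1)
    (.box (.iff (Mf 0)
      (.and (.neg pf) (.and (pdia ts pf (Mf 1)) (.neg (pdiaN ts pf 2 (Mf 1)))))))))

/-- `A₅ = ∀x∀y □⋀_{t∈T}(M(x) ∧ P_t(y) → □(M(x) → P_t(y)))` -/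
def A5g (ts : TileSet) (Mf : ℕ → F ts) (Pf : Fin (ts.s + 1) → ℕ → F ts) : F ts :=
  .all 0 (.all 1 (.box (.bigAnd ((tiles ts).map fun t =>
    .imp (.and (Mf 0) (Pf t 1)) (.box (.imp (Mf 0) (Pf t 1)))))))

/-- `A₆ = ∀x □⋀_{t∈T}(P_t(x) → ⋀_{t'≠t} ¬P_{t'}(x))` -/
def A6g (ts : TileSet) (Pf : Fin (ts.s + 1) → ℕ → F ts) : F ts :=
  .all 0 (.box (.bigAnd ((tiles ts).map fun t =>
    .imp (Pf t 0)
      (.bigAnd (((tiles ts).filter (fun t' => decide (t' ≠ t))).map fun t' => .neg (Pf t' 0))))))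

/-- `A₇ = ∀x∀y □⋀_{t∈T}(x◁y ∧ P_t(x) → ⋁_{right(t)=left(t')} P_{t'}(y))` -/
def A7g (ts : TileSet) (rel : ℕ → ℕ → F ts) (Pf : Fin (ts.s + 1) → ℕ → F ts) : F ts :=
  .all 0 (.all 1 (.box (.bigAnd ((tiles ts).map fun t =>
    .imp (.and (rel 0 1) (Pf t 0))
      (.bigOr (((tiles ts).filter fun t' => decide (ts.right t = ts.left t')).map
        fun t' => Pf t' 1))))))

/-- `A₈ = ∀x∀y □⋀_{t∈T}(M(x) ∧ P_t(y) → □(∃y(x◁y ∧ M(y)) → ⋁_{up(t)=down(t')} P_{t'}(y)))` -/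
def A8g (ts : TileSet) (rel : ℕ → ℕ → F ts) (Mf : ℕ → F ts)
    (Pf : Fin (ts.s + 1) → ℕ → F ts) : F ts :=
  .all 0 (.all 1 (.box (.bigAnd ((tiles ts).map fun t =>
    .imp (.and (Mf 0) (Pf t 1))
      (.box (.imp (.ex 1 (.and (rel 0 1) (Mf 1)))
        (.bigOr (((tiles ts).filter fun t' => decide (ts.up t = ts.down t')).map
          fun t' => Pf t' 1))))))))

/-- `A₉ = ∀x(M(x) → □⟐P_{t₀}(x))` -/
def A9g (ts : TileSet) (Mf : ℕ → F ts) (Pf : Fin (ts.s + 1) → ℕ → F ts) (pf : F ts) : F ts :=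
  .all 0 (.imp (Mf 0) (.box (pdia ts pf (Pf 0 0))))

/-- The list `[A₀, …, A₈]` (all conjuncts of `A` except `A₉`), parametrised. -/
def AlistB (ts : TileSet) (rel : ℕ → ℕ → F ts) (Mf : ℕ → F ts)
    (Pf : Fin (ts.s + 1) → ℕ → F ts) (pf : F ts) : List (F ts) :=
  [A0g ts Pf, A1g ts Mf Pf, A2g ts rel, A3g ts rel Mf, A4g ts rel Mf pf,
   A5g ts Mf Pf, A6g ts Pf, A7g ts rel Pf, A8g ts rel Mf Pf]

/-- The tile letters `P_{t₀}, …, P_{t_s}`, i.e. `P₀, …, P_s`. -/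
def PfA (ts : TileSet) : Fin (ts.s + 1) → ℕ → F ts := fun t v => Px ts (tl ts t) v

/-- The formula `A`: the conjunction of `A₀` through `A₉`. -/
def A (ts : TileSet) : F ts :=
  .bigAnd (AlistB ts (ltA ts) (Mx ts) (PfA ts) (pp ts) ++
    [A9g ts (Mx ts) (PfA ts) (pp ts)])

/-- The formula `B`: the conjunction of `A₀` through `A₈`. -/
def B (ts : TileSet) : F ts := .bigAnd (AlistB ts (ltA ts) (Mx ts) (PfA ts) (pp ts))

/-- `A₉• = ∀x(M(x) → □(∃y M(y) → ⟐(∃y M(y) → P_{t₀}(x))))` -/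
def A9bul (ts : TileSet) : F ts :=
  .all 0 (.imp (Mx ts 0) (.box (.imp (.ex 1 (Mx ts 1))
    (pdia ts (pp ts) (.imp (.ex 1 (Mx ts 1)) (PfA ts 0 0))))))

/-- The formula `A•`: the conjunction of `A₀` through `A₈` together with `A₉•`. -/
def Abullet (ts : TileSet) : F ts :=
  .bigAnd (AlistB ts (ltA ts) (Mx ts) (PfA ts) (pp ts) ++ [A9bul ts])

/-- `⟐(P_{s+1}(x) ∧ P_{s+2}(y))`, the formula substituted for `x ◁ y` in `A′`. -/
def relA' (ts : TileSet) (v w : ℕ) : F ts :=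
  pdia ts (pp ts) (.and (Px ts ⟨ts.s + 1, by omega⟩ v) (Px ts ⟨ts.s + 2, by omega⟩ w))

/-- The formula `A′`: the result of substituting `⟐(P_{s+1}(x) ∧ P_{s+2}(y))` for
`x ◁ y` throughout `A`. -/
def A' (ts : TileSet) : F ts :=
  .bigAnd (AlistB ts (relA' ts) (Mx ts) (PfA ts) (pp ts) ++
    [A9g ts (Mx ts) (PfA ts) (pp ts)])

/-- `∀x P(x)`, the marker formula of the operator `⊡`. -/
def pfS (ts : TileSet) : F ts := .all 0 (PP ts 0)

/-- `⊡φ = ◇(∀x P(x) ∧ ◇(¬∀x P(x) ∧ φ))`. -/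
def bdia (ts : TileSet) (φ : F ts) : F ts := pdia ts (pfS ts) φ

/-- Iterated `⊡`. -/
def bdiaN (ts : TileSet) (n : ℕ) (φ : F ts) : F ts := pdiaN ts (pfS ts) n φ

/-- `q ∧ P(v)`, the replacement of `M(v)`. -/
def MS (ts : TileSet) (v : ℕ) : F ts := .and (qq ts) (PP ts v)

/-- `βₙ(x) = ∃y(⊡^{s+4}(q ∧ P(y)) ∧ ¬⊡^{s+5}(q ∧ P(y)) ∧
⊡(⊡^{n+1}(q ∧ P(y)) ∧ ¬⊡^{n+2}(q ∧ P(y)) ∧ P(x)))`, and `βₙ(y)` with `x`, `y` exchanged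
(the variables `x`, `y` are `0`, `1`, so the bound variable is `1 - v`). -/
def beta (ts : TileSet) (n : Fin (ts.s + 3)) (v : ℕ) : F ts :=
  .ex (1 - v) (.and (bdiaN ts (ts.s + 4) (MS ts (1 - v)))
    (.and (.neg (bdiaN ts (ts.s + 5) (MS ts (1 - v))))
      (bdia ts (.and (bdiaN ts ((n : ℕ) + 1) (MS ts (1 - v)))
        (.and (.neg (bdiaN ts ((n : ℕ) + 2) (MS ts (1 - v)))) (PP ts v))))))

/-- The replacement `βₜ` of the tile letters. -/
def PfS (ts : TileSet) : Fin (ts.s + 1) → ℕ → F ts := fun t v => beta ts (tl ts t) v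

/-- `⊡(β_{s+1}(x) ∧ β_{s+2}(y))`, the replacement of `x ◁ y` in `A*`. -/
def relS (ts : TileSet) (v w : ℕ) : F ts :=
  bdia ts (.and (beta ts ⟨ts.s + 1, by omega⟩ v) (beta ts ⟨ts.s + 2, by omega⟩ w))

/-- `A₄* = ∀x∀y(⊡(β_{s+1}(x) ∧ β_{s+2}(y)) →
□(q ∧ P(x) ↔ ¬∀x P(x) ∧ ⊡^{s+4}(q ∧ P(y)) ∧ ¬⊡^{s+5}(q ∧ P(y))))` -/
def A4star (ts : TileSet) : F ts :=
  .all 0 (.all 1 (.imp (relS ts 0 1)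
    (.box (.iff (MS ts 0)
      (.and (.neg (pfS ts))
        (.and (bdiaN ts (ts.s + 4) (MS ts 1)) (.neg (bdiaN ts (ts.s + 5) (MS ts 1)))))))))

/-- `A₉* = ∀x(q ∧ P(x) → □⊡β₀(x))` -/
def A9star (ts : TileSet) : F ts :=
  .all 0 (.imp (MS ts 0) (.box (bdia ts (beta ts ⟨0, by omega⟩ 0))))

/-- The list `[A₀*, …, A₈*]`. -/
def BstarList (ts : TileSet) : List (F ts) :=
  [A0g ts (PfS ts), A1g ts (MS ts) (PfS ts), A2g ts (relS ts), A3g ts (relS ts) (MS ts),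
   A4star ts, A5g ts (MS ts) (PfS ts), A6g ts (PfS ts), A7g ts (relS ts) (PfS ts),
   A8g ts (relS ts) (MS ts) (PfS ts)]

/-- The formula `A*`: the conjunction of `A₀*` through `A₉*`. -/
def Astar (ts : TileSet) : F ts := .bigAnd (BstarList ts ++ [A9star ts])

/-- The formula `B*`: the conjunction of `A₀*` through `A₈*`. -/
def Bstar (ts : TileSet) : F ts := .bigAnd (BstarList ts)

/-- The formula `A⁺`: the result of replacing every `□` in `A*` by `□⁺`. -/
def Aplus (ts : TileSet) : F ts := (Astar ts).plus

/-- The formula `B⁺`: the result of replacing every `□` in `B*` by `□⁺`. -/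
def Bplus (ts : TileSet) : F ts := (Bstar ts).plus

end Enc

end FOML
namespace FOML
open Enc

section Semantics

variable {W : Type*} {R : W → W → Prop} {ts : TileSet}

/-- Reflexive closure of the accessibility relation. -/
def rle (R : W → W → Prop) (w v : W) : Prop := w = v ∨ R w v

/-- Truth of the `plus`-translation. -/
def tp {Pred : ℕ → Type} (K : KModel W R Pred) (φ : Fml Pred) (w : W) (g : ℕ → K.Dom) : Prop :=
  truth K φ.plus w g

section basic
variable {Pred : ℕ → Type} (K : KModel W R Pred) (φ ψ : Fml Pred) (w : W) (g : ℕ → K.Dom)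

theorem tp_imp : tp K (.imp φ ψ) w g ↔ (tp K φ w g → tp K ψ w g) := Iff.rfl
theorem tp_bot : tp K .bot w g ↔ False := Iff.rfl
theorem tp_neg : tp K (.neg φ) w g ↔ ¬ tp K φ w g := Iff.rfl
theorem tp_all (x : ℕ) : tp K (.all x φ) w g ↔
    ∀ d ∈ K.D w, tp K φ w (Function.update g x d) := Iff.rfl
theorem tp_and : tp K (.and φ ψ) w g ↔ (tp K φ w g ∧ tp K ψ w g) := by
  simp only [Fml.and, tp_neg, tp_imp]; tauto
theorem tp_or : tp K (.or φ ψ) w g ↔ (tp K φ w g ∨ tp K ψ w g) := by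
  simp only [Fml.or, tp_neg, tp_imp]; tauto
theorem tp_iff : tp K (.iff φ ψ) w g ↔ (tp K φ w g ↔ tp K ψ w g) := by
  simp only [Fml.iff, tp_and, tp_imp]; tauto
theorem tp_ex (x : ℕ) : tp K (.ex x φ) w g ↔
    ∃ d ∈ K.D w, tp K φ w (Function.update g x d) := by
  simp only [Fml.ex, tp_neg, tp_all]; push Not; rfl
theorem truth_and' : truth K (.and φ ψ) w g ↔ (truth K φ w g ∧ truth K ψ w g) := by
  simp only [Fml.and, Fml.neg, truth]; tauto
theorem tp_box : tp K (.box φ) w g ↔ ∀ v, rle R w v → tp K φ v g := by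
  show truth K (.and φ.plus (.box φ.plus)) w g ↔ _
  rw [truth_and']
  constructor
  · rintro ⟨h1, h2⟩ v (rfl | h)
    · exact h1
    · exact h2 v h
  · intro h
    exact ⟨h w (Or.inl rfl), fun v hv => h v (Or.inr hv)⟩
theorem tp_dia : tp K (.dia φ) w g ↔ ∃ v, rle R w v ∧ tp K φ v g := by
  simp only [Fml.dia, tp_neg, tp_box]; push Not; rfl
theorem tp_bigAnd (l : List (Fml Pred)) : tp K (.bigAnd l) w g ↔ ∀ χ ∈ l, tp K χ w g := by
  induction l with
  | nil => simp [Fml.bigAnd, Fml.top, tp_neg, tp_bot]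
  | cons a l ih => simp [Fml.bigAnd, tp_and, ih]
theorem tp_bigOr (l : List (Fml Pred)) : tp K (.bigOr l) w g ↔ ∃ χ ∈ l, tp K χ w g := by
  induction l with
  | nil => simp [Fml.bigOr, tp_bot]
  | cons a l ih => simp [Fml.bigOr, tp_or, ih]
end basic

variable (K : KModel W R (Letter ts.s))

/-- The letter `P`, semantically. -/
def sP (w : W) (a : K.Dom) : Prop := K.I w 1 Letter.Pm (fun _ => a)
/-- The letter `q`, semantically. -/
def sq (w : W) : Prop := tp K (qq ts) w (fun _ => (K.D_ne w).some)
/-- The marker `∀x P(x)`, semantically. -/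
def sp (w : W) : Prop := ∀ d ∈ K.D w, sP K w d
/-- `q ∧ P(x)`, semantically. -/
def sM (a : K.Dom) (w : W) : Prop := sq K w ∧ sP K w a
/-- `⊡`, semantically. -/
def sB (φ : W → Prop) (w : W) : Prop :=
  ∃ v, rle R w v ∧ sp K v ∧ ∃ u, rle R v u ∧ ¬ sp K u ∧ φ u
/-- Iterated `⊡`, semantically. -/
def sBN : ℕ → (W → Prop) → W → Prop
  | 0, φ => φ
  | n + 1, φ => sB K (sBN n φ)
/-- `βₙ(x)`, semantically. -/
def sbeta (n : ℕ) (a : K.Dom) (w : W) : Prop :=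
  ∃ d ∈ K.D w, sBN K (ts.s + 4) (sM K d) w ∧ ¬ sBN K (ts.s + 5) (sM K d) w ∧
    sB K (fun u => sBN K (n + 1) (sM K d) u ∧ ¬ sBN K (n + 2) (sM K d) u ∧ sP K u a) w
/-- `x ◁ y`, semantically. -/
def srel (a b : K.Dom) (w : W) : Prop :=
  sB K (fun u => sbeta K (ts.s + 1) a u ∧ sbeta K (ts.s + 2) b u) w

theorem tp_PP (v : ℕ) (w : W) (g : ℕ → K.Dom) : tp K (PP ts v) w g ↔ sP K w (g v) := Iff.rfl
theorem tp_qq (w : W) (g : ℕ → K.Dom) : tp K (qq ts) w g ↔ sq K w := by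
  unfold sq tp qq Fml.plus truth
  have : (fun i : Fin 0 => g (Fin.elim0 i)) = fun i : Fin 0 => (K.D_ne w).some := by
    funext i; exact i.elim0
  exact iff_of_eq (congrArg _ this)
theorem tp_MS (v : ℕ) (w : W) (g : ℕ → K.Dom) : tp K (MS ts v) w g ↔ sM K (g v) w := by
  rw [MS, tp_and, tp_qq, tp_PP]; rfl
theorem tp_pfS (w : W) (g : ℕ → K.Dom) : tp K (pfS ts) w g ↔ sp K w := by
  rw [pfS, tp_all]; simp [tp_PP, sp]
theorem tp_bdia (φ : F ts) (w : W) (g : ℕ → K.Dom) :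
    tp K (bdia ts φ) w g ↔ sB K (fun u => tp K φ u g) w := by
  simp only [bdia, pdia, tp_dia, tp_and, tp_neg, tp_pfS, sB]
theorem tp_bdiaN (n : ℕ) (φ : F ts) (w : W) (g : ℕ → K.Dom) :
    tp K (bdiaN ts n φ) w g ↔ sBN K n (fun u => tp K φ u g) w := by
  induction n generalizing w with
  | zero => rfl
  | succ n ih =>
    show tp K (bdia ts (bdiaN ts n φ)) w g ↔ _
    rw [tp_bdia]; simp only [ih]; rfl
theorem tp_beta (n : Fin (ts.s + 3)) (v : ℕ) (hv : v = 0 ∨ v = 1) (w : W) (g : ℕ → K.Dom) :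
    tp K (beta ts n v) w g ↔ sbeta K n (g v) w := by
  have hne : v ≠ 1 - v := by omega
  simp only [beta, tp_ex, tp_and, tp_neg, tp_bdia, tp_bdiaN, tp_MS, tp_PP, sbeta,
    Function.update_self, Function.update_of_ne hne]
theorem tp_rel (w : W) (g : ℕ → K.Dom) : tp K (relS ts 0 1) w g ↔ srel K (g 0) (g 1) w := by
  rw [relS, tp_bdia]
  simp only [tp_and, tp_beta K _ 0 (Or.inl rfl), tp_beta K _ 1 (Or.inr rfl)]
  rfl
theorem tp_PfS0 (t : Fin (ts.s + 1)) (w : W) (g : ℕ → K.Dom) :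
    tp K (PfS ts t 0) w g ↔ sbeta K t (g 0) w := by
  rw [PfS, tp_beta K _ 0 (Or.inl rfl)]; rfl
theorem tp_PfS1 (t : Fin (ts.s + 1)) (w : W) (g : ℕ → K.Dom) :
    tp K (PfS ts t 1) w g ↔ sbeta K t (g 1) w := by
  rw [PfS, tp_beta K _ 1 (Or.inr rfl)]; rfl

/-- The semantic content of `B⁺` at `w`. -/
structure SemB (w : W) : Prop where
  a0 : ∃ a ∈ K.D w, ∀ v, rle R w v → ∀ t : Fin (ts.s + 1), ¬ sbeta K t a v
  a1 : ∃ a ∈ K.D w, (∃ t : Fin (ts.s + 1), sbeta K t a w) ∧ sM K a w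
  a2 : ∀ a ∈ K.D w, ∃ b ∈ K.D w, srel K a b w
  a3 : ∀ a ∈ K.D w, ∀ b ∈ K.D w, srel K a b w → ∀ v, rle R w v →
    (∃ d ∈ K.D v, sM K d v) → srel K a b v
  a4 : ∀ a ∈ K.D w, ∀ b ∈ K.D w, srel K a b w → ∀ v, rle R w v →
    (sM K a v ↔ ¬ sp K v ∧ sBN K (ts.s + 4) (sM K b) v ∧ ¬ sBN K (ts.s + 5) (sM K b) v)
  a5 : ∀ a ∈ K.D w, ∀ b ∈ K.D w, ∀ v, rle R w v → ∀ t : Fin (ts.s + 1),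
    sM K a v ∧ sbeta K t b v → ∀ u, rle R v u → sM K a u → sbeta K t b u
  a6 : ∀ a ∈ K.D w, ∀ v, rle R w v → ∀ t : Fin (ts.s + 1), sbeta K t a v →
    ∀ t' : Fin (ts.s + 1), t' ≠ t → ¬ sbeta K t' a v
  a7 : ∀ a ∈ K.D w, ∀ b ∈ K.D w, ∀ v, rle R w v → ∀ t : Fin (ts.s + 1),
    srel K a b v ∧ sbeta K t a v →
    ∃ t' : Fin (ts.s + 1), ts.right t = ts.left t' ∧ sbeta K t' b v
  a8 : ∀ a ∈ K.D w, ∀ b ∈ K.D w, ∀ v, rle R w v → ∀ t : Fin (ts.s + 1),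
    sM K a v ∧ sbeta K t b v → ∀ u, rle R v u →
    (∃ d ∈ K.D u, srel K a d u ∧ sM K d u) →
    ∃ t' : Fin (ts.s + 1), ts.up t = ts.down t' ∧ sbeta K t' b u

theorem tp_Bstar (w : W) (g : ℕ → K.Dom) : tp K (Bstar ts) w g ↔ SemB K w := by
  have e0 : tp K (A0g ts (PfS ts)) w g ↔
      ∃ a ∈ K.D w, ∀ v, rle R w v → ∀ t : Fin (ts.s + 1), ¬ sbeta K t a v := by
    simp [A0g, Ug, tiles, tp_ex, tp_box, tp_bigAnd, tp_neg, tp_PfS0]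
  have e1 : tp K (A1g ts (MS ts) (PfS ts)) w g ↔
      ∃ a ∈ K.D w, (∃ t : Fin (ts.s + 1), sbeta K t a w) ∧ sM K a w := by
    simp [A1g, Ug, tiles, tp_ex, tp_and, tp_bigAnd, tp_neg, tp_PfS0, tp_MS]
  have e2 : tp K (A2g ts (relS ts)) w g ↔ ∀ a ∈ K.D w, ∃ b ∈ K.D w, srel K a b w := by
    simp [A2g, tp_ex, tp_all, tp_rel]
  have e3 : tp K (A3g ts (relS ts) (MS ts)) w g ↔
      ∀ a ∈ K.D w, ∀ b ∈ K.D w, srel K a b w → ∀ v, rle R w v →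
        (∃ d ∈ K.D v, sM K d v) → srel K a b v := by
    simp [A3g, tp_ex, tp_all, tp_rel, tp_imp, tp_box, tp_MS]
  have e4 : tp K (A4star ts) w g ↔
      ∀ a ∈ K.D w, ∀ b ∈ K.D w, srel K a b w → ∀ v, rle R w v →
        (sM K a v ↔ ¬ sp K v ∧ sBN K (ts.s + 4) (sM K b) v ∧
          ¬ sBN K (ts.s + 5) (sM K b) v) := by
    simp only [A4star, tp_all, tp_rel, tp_imp, tp_box, tp_MS, tp_iff, tp_and, tp_neg,
      tp_bdiaN, tp_pfS]
    simp
  have e5 : tp K (A5g ts (MS ts) (PfS ts)) w g ↔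
      ∀ a ∈ K.D w, ∀ b ∈ K.D w, ∀ v, rle R w v → ∀ t : Fin (ts.s + 1),
        sM K a v ∧ sbeta K t b v → ∀ u, rle R v u → sM K a u → sbeta K t b u := by
    simp [A5g, tiles, tp_all, tp_box, tp_bigAnd, tp_imp, tp_and, tp_PfS1, tp_MS]
  have e6 : tp K (A6g ts (PfS ts)) w g ↔
      ∀ a ∈ K.D w, ∀ v, rle R w v → ∀ t : Fin (ts.s + 1), sbeta K t a v →
        ∀ t' : Fin (ts.s + 1), t' ≠ t → ¬ sbeta K t' a v := by
    simp [A6g, tiles, tp_all, tp_box, tp_bigAnd, tp_imp, tp_neg, tp_PfS0]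
  have e7 : tp K (A7g ts (relS ts) (PfS ts)) w g ↔
      ∀ a ∈ K.D w, ∀ b ∈ K.D w, ∀ v, rle R w v → ∀ t : Fin (ts.s + 1),
        srel K a b v ∧ sbeta K t a v →
        ∃ t' : Fin (ts.s + 1), ts.right t = ts.left t' ∧ sbeta K t' b v := by
    simp [A7g, tiles, tp_all, tp_box, tp_bigAnd, tp_bigOr, tp_imp, tp_and, tp_PfS0, tp_PfS1,
      tp_rel]
  have e8 : tp K (A8g ts (relS ts) (MS ts) (PfS ts)) w g ↔
      ∀ a ∈ K.D w, ∀ b ∈ K.D w, ∀ v, rle R w v → ∀ t : Fin (ts.s + 1),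
        sM K a v ∧ sbeta K t b v → ∀ u, rle R v u →
        (∃ d ∈ K.D u, srel K a d u ∧ sM K d u) →
        ∃ t' : Fin (ts.s + 1), ts.up t = ts.down t' ∧ sbeta K t' b u := by
    simp [A8g, tiles, tp_all, tp_ex, tp_box, tp_bigAnd, tp_bigOr, tp_imp, tp_and, tp_PfS1,
      tp_rel, tp_MS]
  rw [Bstar, tp_bigAnd]
  simp only [BstarList, List.forall_mem_cons, e0, e1, e2, e3, e4, e5, e6, e7, e8]
  constructor
  · rintro ⟨h0, h1, h2, h3, h4, h5, h6, h7, h8, -⟩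
    exact ⟨h0, h1, h2, h3, h4, h5, h6, h7, h8⟩
  · rintro ⟨h0, h1, h2, h3, h4, h5, h6, h7, h8⟩
    exact ⟨h0, h1, h2, h3, h4, h5, h6, h7, h8, by simp⟩

theorem sBN_witness (htr : ∀ a b c, rle R a b → rle R b c → rle R a c) (n : ℕ)
    (φ : W → Prop) (w : W) (h : sBN K n φ w) : ∃ v, rle R w v ∧ φ v := by
  induction n generalizing w with
  | zero => exact ⟨w, Or.inl rfl, h⟩
  | succ n ih =>
    obtain ⟨v, h1, -, u, h2, -, h3⟩ := h
    obtain ⟨z, h4, h5⟩ := ih u h3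
    exact ⟨z, htr _ _ _ h1 (htr _ _ _ h2 h4), h5⟩

/-- Extracting a tiling from a model of `B⁺`. -/
theorem tiling_of_SemB (htr : ∀ a b c, rle R a b → rle R b c → rle R a c) (w : W)
    (h : SemB K w) : ∃ f : ℕ → ℕ → Fin (ts.s + 1), ts.T1 f ∧ ts.T2 f := by
  obtain ⟨x, hx, ⟨t0, ht0⟩, hMx⟩ := h.a1
  have hD : ∀ v, rle R w v → K.D w ⊆ K.D v := by
    rintro v (rfl | hv)
    · exact subset_rfl
    · exact K.D_mono hv
  choose! S hS hrel using h.a2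
  let a : ℕ → K.Dom := fun n => S^[n] x
  have ha : ∀ n, a n ∈ K.D w := by
    intro n
    induction n with
    | zero => exact hx
    | succ n ih =>
      show S^[n+1] x ∈ _
      rw [Function.iterate_succ_apply']; exact hS _ ih
  have har : ∀ n, srel K (a n) (a (n+1)) w := by
    intro n
    have : a (n+1) = S (a n) := Function.iterate_succ_apply' S n x
    rw [this]; exact hrel _ (ha n)
  have step : ∀ n (v : W), rle R w v ∧ sM K (a n) v →
      ∃ u, rle R v u ∧ (rle R w u ∧ sM K (a (n+1)) u) := by
    rintro n v ⟨hv, hM⟩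
    have := ((h.a4 _ (ha n) _ (ha (n+1)) (har n) v hv).1 hM).2.1
    obtain ⟨u, hu, hMu⟩ := sBN_witness K htr _ _ _ this
    exact ⟨u, hu, htr _ _ _ hv hu, hMu⟩
  choose! nx hnx1 hnx2 using step
  let ω : ℕ → W := fun n => Nat.rec w (fun n v => nx n v) n
  have hω : ∀ n, rle R w (ω n) ∧ sM K (a n) (ω n) := by
    intro n
    induction n with
    | zero => exact ⟨Or.inl rfl, hMx⟩
    | succ n ih => exact hnx2 n _ ih
  have hωs : ∀ n, rle R (ω n) (ω (n+1)) := fun n => hnx1 n _ (hω n)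
  have hr : ∀ n m, srel K (a n) (a (n+1)) (ω m) := fun n m =>
    h.a3 _ (ha n) _ (ha (n+1)) (har n) _ (hω m).1 ⟨a m, hD _ (hω m).1 (ha m), (hω m).2⟩
  have right : ∀ n m (t : Fin (ts.s + 1)), sbeta K t (a n) (ω m) →
      ∃ t' : Fin (ts.s + 1), ts.right t = ts.left t' ∧ sbeta K t' (a (n+1)) (ω m) :=
    fun n m t ht => h.a7 _ (ha n) _ (ha (n+1)) _ (hω m).1 t ⟨hr n m, ht⟩
  have up : ∀ n m (t : Fin (ts.s + 1)), sbeta K t (a n) (ω m) →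
      ∃ t' : Fin (ts.s + 1), ts.up t = ts.down t' ∧ sbeta K t' (a n) (ω (m+1)) :=
    fun n m t ht => h.a8 _ (ha m) _ (ha n) _ (hω m).1 t ⟨(hω m).2, ht⟩ _ (hωs m)
      ⟨a (m+1), hD _ (hω (m+1)).1 (ha (m+1)), hr m (m+1), (hω (m+1)).2⟩
  have uniq : ∀ n m (t t' : Fin (ts.s + 1)), sbeta K t (a n) (ω m) →
      sbeta K t' (a n) (ω m) → t' = t := by
    intro n m t t' h1 h2
    by_contra hne
    exact h.a6 _ (ha n) _ (hω m).1 t h1 t' hne h2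
  have ex : ∀ n m, ∃ t : Fin (ts.s + 1), sbeta K t (a n) (ω m) := by
    intro n m
    induction m with
    | zero =>
      induction n with
      | zero => exact ⟨t0, ht0⟩
      | succ n ih =>
        obtain ⟨t, ht⟩ := ih
        obtain ⟨t', -, ht'⟩ := right n 0 t ht
        exact ⟨t', ht'⟩
    | succ m ih =>
      obtain ⟨t, ht⟩ := ih
      obtain ⟨t', -, ht'⟩ := up n m t ht
      exact ⟨t', ht'⟩
  choose f hf using ex
  refine ⟨f, fun n m => ?_, fun n m => ?_⟩
  · obtain ⟨t', h1, h2⟩ := right n m _ (hf n m)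
    rw [h1, uniq (n+1) m _ _ (hf (n+1) m) h2]
  · obtain ⟨t', h1, h2⟩ := up n m _ (hf n m)
    rw [h1, uniq n (m+1) _ _ (hf n (m+1)) h2]

end Semantics

section Construction

variable {W : Type*} (lt : W → W → Prop) (c : ℕ → W)

/-- `w` is at position `i` with respect to the chain `c`. -/
def At (w : W) (i : ℕ) : Prop := lt w (c (i + 1)) ∧ ∀ j < i, ¬ lt w (c (j + 1))

/-- Enumeration of the domain in which every element occurs infinitely often. -/
def en (m : ℕ) : Option ℕ := if m.unpair.1 = 0 then none else some (m.unpair.1 - 1)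

/-- The interpretation of the letters `P₀, …, P_{s+2}` at the `m`-th block. -/
def code (ts : TileSet) (f : ℕ → ℕ → Fin (ts.s + 1)) (n m : ℕ) (x : Option ℕ) : Prop :=
  if n ≤ ts.s then ∃ a, x = some a ∧ (f a m : ℕ) = n
  else if n = ts.s + 1 then x = en m else x = (en m).map Nat.succ

/-- The interpretation of `P` at position `2k`. -/
def PC (ts : TileSet) (f : ℕ → ℕ → Fin (ts.s + 1)) (k : ℕ) (x : Option ℕ) : Prop :=
  if k % (ts.s + 4) = 0 then x = some (k / (ts.s + 4))
  else code ts f (ts.s + 3 - k % (ts.s + 4)) (k / (ts.s + 4)) x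

/-- The interpretation of all letters. -/
def interp (ts : TileSet) (f : ℕ → ℕ → Fin (ts.s + 1)) (w : W) :
    (n : ℕ) → Letter ts.s n → (Fin n → Option ℕ) → Prop
  | _, .Pm, as => ∀ k, At lt c w (2 * k) → PC ts f k (as 0)
  | _, .q, _ => ∃ m, At lt c w (2 * ((ts.s + 4) * m))
  | _, _, _ => False

/-- The constant-domain model. -/
abbrev mdl (R : W → W → Prop) (ts : TileSet) (f : ℕ → ℕ → Fin (ts.s + 1)) :
    KModel W R (Letter ts.s) where
  Dom := Option ℕ
  D := fun _ => Set.univ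
  D_ne := fun _ => ⟨none, trivial⟩
  D_mono := fun _ _ _ => subset_rfl
  I := interp lt c ts f
  I_dom := fun _ _ _ _ _ _ => trivial

theorem en_surj (x : Option ℕ) (b : ℕ) : ∃ m, b ≤ m ∧ en m = x := by
  cases x with
  | none => exact ⟨Nat.pair 0 b, Nat.right_le_pair _ _, by simp [en]⟩
  | some a => exact ⟨Nat.pair (a+1) b, Nat.right_le_pair _ _, by simp [en]⟩

variable {lt c}

theorem At.uniq {w : W} {i j : ℕ} (h : At lt c w i) (h' : At lt c w j) : i = j := by
  rcases Nat.lt_trichotomy i j with hh | hh | hh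
  · exact absurd h.1 (h'.2 i hh)
  · exact hh
  · exact absurd h'.1 (h.2 j hh)

theorem At.exists {w : W} {i : ℕ} (h : lt w (c (i+1))) : ∃ j ≤ i, At lt c w j := by
  classical
  have hex : ∃ j, lt w (c (j+1)) := ⟨i, h⟩
  exact ⟨Nat.find hex, Nat.find_min' hex h, Nat.find_spec hex, fun j hj => Nat.find_min hex hj⟩

theorem chain_mono (htrans : ∀ a b c, lt a b → lt b c → lt a c)
    (hchain : ∀ n, lt (c n) (c (n + 1))) {i j : ℕ} (h : i < j) : lt (c i) (c j) := by
  induction j, h using Nat.le_induction with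
  | base => exact hchain i
  | succ j _ ih => exact htrans _ _ _ ih (hchain j)

theorem At_chain (hirr : ∀ a, ¬ lt a a) (htrans : ∀ a b c, lt a b → lt b c → lt a c)
    (hchain : ∀ n, lt (c n) (c (n + 1))) (i : ℕ) : At lt c (c i) i := by
  refine ⟨hchain i, fun j hj h => ?_⟩
  rcases Nat.lt_or_eq_of_le (Nat.succ_le_of_lt hj) with h1 | h1
  · exact hirr _ (htrans _ _ _ h (chain_mono htrans hchain h1))
  · have : j + 1 = i := h1
    rw [this] at h
    exact hirr _ h

/-- Hypotheses on the frame and the chain. -/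
structure Hyp (lt : W → W → Prop) (c : ℕ → W) (R : W → W → Prop) : Prop where
  irr : ∀ a, ¬ lt a a
  trans : ∀ a b c, lt a b → lt b c → lt a c
  chain : ∀ n, lt (c n) (c (n + 1))
  R1 : ∀ a b, lt a b → R a b
  R2 : ∀ a b, R a b → lt a b ∨ a = b

variable {R : W → W → Prop} {ts : TileSet} {f : ℕ → ℕ → Fin (ts.s + 1)}

theorem Hyp.lt_of_rle (H : Hyp lt c R) {a b d : W} (h : rle R a b) (h' : lt b d) : lt a d := by
  rcases h with rfl | h
  · exact h'
  · rcases H.R2 _ _ h with h | rfl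
    · exact H.trans _ _ _ h h'
    · exact h'

theorem Hyp.at_mono (H : Hyp lt c R) {w v : W} {j : ℕ} (h : rle R w v) (hj : At lt c v j) :
    ∃ i ≤ j, At lt c w i := At.exists (H.lt_of_rle h hj.1)

theorem Hyp.rle_chain (H : Hyp lt c R) {w : W} {i j : ℕ} (hw : At lt c w i) (h : i < j) :
    rle R w (c j) := by
  right
  apply H.R1
  rcases Nat.lt_or_eq_of_le (Nat.succ_le_of_lt h) with h1 | h1
  · exact H.trans _ _ _ hw.1 (chain_mono H.trans H.chain h1)
  · rw [← h1]; exact hw.1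

theorem PC_ne (k : ℕ) : ∃ x, ¬ PC ts f k x := by
  have key : ∀ z : Option ℕ, ∃ x, ¬ x = z := fun z => exists_ne z
  unfold PC code
  split_ifs
  · exact key _
  · exact ⟨none, by simp⟩
  · exact key _
  · exact key _

theorem PC_block (m n : ℕ) (hn : n ≤ ts.s + 2) (x : Option ℕ) :
    PC ts f ((ts.s + 4) * m + (ts.s + 3 - n)) x ↔ code ts f n m x := by
  have h1 : ((ts.s + 4) * m + (ts.s + 3 - n)) % (ts.s + 4) = ts.s + 3 - n := by
    rw [Nat.mul_add_mod, Nat.mod_eq_of_lt (by omega)]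
  have h2 : ((ts.s + 4) * m + (ts.s + 3 - n)) / (ts.s + 4) = m := by
    rw [Nat.mul_add_div (by omega), Nat.div_eq_of_lt (by omega), Nat.add_zero]
  have h3 : ts.s + 3 - (ts.s + 3 - n) = n := by omega
  have h4 : ts.s + 3 - n ≠ 0 := by omega
  rw [PC, h1, h2, h3, if_neg h4]

theorem sP_mdl {w : W} {x : Option ℕ} :
    sP (mdl lt c R ts f) w x ↔ ∀ k, At lt c w (2 * k) → PC ts f k x := Iff.rfl

theorem sp_mdl {w : W} : sp (mdl lt c R ts f) w ↔ ¬ ∃ k, At lt c w (2 * k) := by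
  constructor
  · rintro h ⟨k, hk⟩
    obtain ⟨x, hx⟩ := PC_ne (ts := ts) (f := f) k
    exact hx (sP_mdl.1 (h x trivial) k hk)
  · intro h x _
    exact sP_mdl.2 fun k hk => absurd ⟨k, hk⟩ h

theorem sq_mdl {w : W} :
    sq (mdl lt c R ts f) w ↔ ∃ m, At lt c w (2 * ((ts.s + 4) * m)) := Iff.rfl

theorem sM_none {w : W} : ¬ sM (mdl lt c R ts f) (none : Option ℕ) w := by
  rintro ⟨h1, h2⟩
  obtain ⟨m, hm⟩ := sq_mdl.1 h1
  have := sP_mdl.1 h2 _ hm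
  simp [PC] at this

theorem sM_some {w : W} {m : ℕ} :
    sM (mdl lt c R ts f) (some m : Option ℕ) w ↔ At lt c w (2 * ((ts.s + 4) * m)) := by
  have hPC : ∀ m', PC ts f ((ts.s + 4) * m') (some m) ↔ m = m' := by
    intro m'
    simp [PC]
  constructor
  · rintro ⟨h1, h2⟩
    obtain ⟨m', hm⟩ := sq_mdl.1 h1
    have := sP_mdl.1 h2 _ hm
    rw [hPC] at this
    rw [this]; exact hm
  · intro h
    refine ⟨sq_mdl.2 ⟨m, h⟩, sP_mdl.2 fun k hk => ?_⟩
    have : k = (ts.s + 4) * m := by have := hk.uniq h; omega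
    rw [this, hPC]

theorem sB_mdl (H : Hyp lt c R) {φ : W → Prop} {ψ : ℕ → Prop}
    (hφ : ∀ u k, At lt c u (2 * k) → (φ u ↔ ψ k)) (w : W) :
    sB (mdl lt c R ts f) φ w ↔ ∃ i k, At lt c w i ∧ i < 2 * k ∧ ψ k := by
  constructor
  · rintro ⟨v, hwv, hpv, u, hvu, hpu, hu⟩
    rw [sp_mdl] at hpv hpu
    push Not at hpu
    obtain ⟨k, hk⟩ := hpu
    obtain ⟨j, hj, hvj⟩ := H.at_mono hvu hk
    obtain ⟨i, hi, hwi⟩ := H.at_mono hwv hvj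
    refine ⟨i, k, hwi, ?_, (hφ u k hk).1 hu⟩
    by_contra hlt
    have : j = 2 * k := by omega
    exact hpv ⟨k, this ▸ hvj⟩
  · rintro ⟨i, k, hi, hik, hψ⟩
    have hck := At_chain H.irr H.trans H.chain (2 * k)
    have hfin : ¬ sp (mdl lt c R ts f) (c (2 * k)) ∧ φ (c (2 * k)) :=
      ⟨by rw [sp_mdl]; push Not; exact ⟨k, hck⟩, (hφ _ k hck).2 hψ⟩
    by_cases hodd : i = 2 * k - 1
    · refine ⟨w, Or.inl rfl, ?_, c (2 * k), H.rle_chain hi hik, hfin⟩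
      rw [sp_mdl]
      rintro ⟨k', hk'⟩
      have := hi.uniq hk'
      omega
    · have hc' := At_chain H.irr H.trans H.chain (2 * k - 1)
      refine ⟨c (2 * k - 1), H.rle_chain hi (by omega), ?_, c (2 * k),
        H.rle_chain hc' (by omega), hfin⟩
      rw [sp_mdl]
      rintro ⟨k', hk'⟩
      have := hc'.uniq hk'
      omega

theorem sBN_none (n : ℕ) (w : W) : ¬ sBN (mdl lt c R ts f) n (sM (mdl lt c R ts f) (none : Option ℕ)) w := by
  induction n generalizing w with
  | zero => exact sM_none
  | succ n ih =>
    rintro ⟨v, -, -, u, -, -, h⟩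
    exact ih u h

theorem sBN_some (H : Hyp lt c R) (m n : ℕ) (w : W) :
    sBN (mdl lt c R ts f) (n + 1) (sM (mdl lt c R ts f) (some m : Option ℕ)) w ↔
      ∃ i, At lt c w i ∧ i + 2 * n < 2 * ((ts.s + 4) * m) := by
  induction n generalizing w with
  | zero =>
    show sB (mdl lt c R ts f) (sM (mdl lt c R ts f) (some m : Option ℕ)) w ↔ _
    rw [sB_mdl H (ψ := fun k => k = (ts.s + 4) * m)]
    · constructor
      · rintro ⟨i, k, h1, h2, rfl⟩
        exact ⟨i, h1, h2⟩
      · rintro ⟨i, h1, h2⟩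
        exact ⟨i, _, h1, h2, rfl⟩
    · intro u k hk
      rw [sM_some]
      constructor
      · intro h
        have := hk.uniq h
        omega
      · rintro rfl
        exact hk
  | succ n ih =>
    show sB (mdl lt c R ts f) (sBN (mdl lt c R ts f) (n + 1) (sM (mdl lt c R ts f) (some m : Option ℕ))) w ↔ _
    rw [sB_mdl H (ψ := fun k => 2 * k + 2 * n < 2 * ((ts.s + 4) * m))]
    · generalize (ts.s + 4) * m = X
      constructor
      · rintro ⟨i, k, h1, h2, h3⟩
        exact ⟨i, h1, by omega⟩
      · rintro ⟨i, h1, h2⟩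
        exact ⟨i, X - n - 1, h1, by omega, by omega⟩
    · intro u k hk
      rw [ih]
      constructor
      · rintro ⟨i, h1, h2⟩
        rw [← h1.uniq hk]; exact h2
      · intro h
        exact ⟨_, hk, h⟩

theorem sbeta_mdl (H : Hyp lt c R) (n : ℕ) (hn : n ≤ ts.s + 2) (x : Option ℕ) (w : W) :
    sbeta (mdl lt c R ts f) n x w ↔ ∃ m, (At lt c w (2 * ((ts.s + 4) * m)) ∨
      At lt c w (2 * ((ts.s + 4) * m) + 1)) ∧ code ts f n m x := by
  have inner : ∀ m : ℕ, sB (mdl lt c R ts f) (fun u =>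
      sBN (mdl lt c R ts f) (n + 1) (sM (mdl lt c R ts f) (some m : Option ℕ)) u ∧
      ¬ sBN (mdl lt c R ts f) (n + 2) (sM (mdl lt c R ts f) (some m : Option ℕ)) u ∧
      sP (mdl lt c R ts f) u x) w ↔
      ∃ i k, At lt c w i ∧ i < 2 * k ∧ (k + n + 1 = (ts.s + 4) * m ∧ PC ts f k x) := by
    intro m
    rw [sB_mdl H]
    intro u k hk
    rw [sBN_some H, sBN_some H, sP_mdl]
    generalize (ts.s + 4) * m = X
    constructor
    · rintro ⟨⟨i, h1, h2⟩, h3, h4⟩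
      refine ⟨?_, h4 k hk⟩
      have e := h1.uniq hk
      by_contra hne
      exact h3 ⟨i, h1, by omega⟩
    · rintro ⟨h1, h2⟩
      refine ⟨⟨_, hk, by omega⟩, ?_, ?_⟩
      · rintro ⟨i, h3, h4⟩
        have e := h3.uniq hk
        omega
      · intro k' hk'
        have e := hk'.uniq hk
        have : k' = k := by omega
        rw [this]; exact h2
  constructor
  · rintro ⟨d, -, h1, h2, h3⟩
    change Option ℕ at d
    cases d with
    | none => exact absurd h1 (sBN_none _ _)
    | some m =>
      obtain ⟨i, k, hi, hik, hk, hPC⟩ := (inner m).1 h3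
      obtain ⟨i', hi', hlt⟩ := (sBN_some H m (ts.s + 3) w).1 h1
      have hnlt : ¬ (i + 2 * (ts.s + 4) < 2 * ((ts.s + 4) * m)) := fun hh =>
        h2 ((sBN_some H m (ts.s + 4) w).2 ⟨i, hi, hh⟩)
      have e := hi'.uniq hi
      subst e
      cases m with
      | zero => simp at hlt
      | succ m =>
        rw [show (ts.s + 4) * (m + 1) = (ts.s + 4) * m + (ts.s + 4) by ring] at hlt hnlt hk
        clear h1 h2 h3 inner
        refine ⟨m, ?_, ?_⟩
        · have : i' = 2 * ((ts.s + 4) * m) ∨ i' = 2 * ((ts.s + 4) * m) + 1 := by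
            generalize (ts.s + 4) * m = X at *
            omega
          rcases this with h | h
          · left; rw [← h]; exact hi
          · right; rw [← h]; exact hi
        · rw [← PC_block m n hn]
          have : k = (ts.s + 4) * m + (ts.s + 3 - n) := by
            generalize (ts.s + 4) * m = X at *
            omega
          rw [← this]; exact hPC
  · rintro ⟨m, hat, hcode⟩
    obtain ⟨i, hi, hi1, hi2⟩ : ∃ i, At lt c w i ∧ 2 * ((ts.s + 4) * m) ≤ i ∧
        i ≤ 2 * ((ts.s + 4) * m) + 1 := by
      rcases hat with h | h
      · exact ⟨_, h, by omega, by omega⟩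
      · exact ⟨_, h, by omega, by omega⟩
    rw [← PC_block m n hn] at hcode
    have hX : (ts.s + 4) * (m + 1) = (ts.s + 4) * m + (ts.s + 4) := by ring
    refine ⟨(some (m + 1) : Option ℕ), trivial, ?_, ?_, ?_⟩
    · rw [sBN_some H, hX]
      refine ⟨i, hi, ?_⟩
      generalize (ts.s + 4) * m = X at *
      omega
    · rw [sBN_some H, hX]
      rintro ⟨i', hi', h⟩
      have e := hi'.uniq hi
      generalize (ts.s + 4) * m = X at *
      omega
    · rw [inner, hX]
      refine ⟨i, _, hi, ?_, ?_, hcode⟩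
      · generalize (ts.s + 4) * m = X at *
        omega
      · generalize (ts.s + 4) * m = X at *
        omega

theorem code_tile (t : Fin (ts.s + 1)) (m : ℕ) (x : Option ℕ) :
    code ts f t m x ↔ ∃ a, x = some a ∧ f a m = t := by
  have : (t : ℕ) ≤ ts.s := by omega
  simp [code, this, Fin.ext_iff]

theorem srel_mdl (H : Hyp lt c R) (x y : Option ℕ) (w : W) :
    srel (mdl lt c R ts f) x y w ↔ (∃ i, At lt c w i) ∧ y = x.map Nat.succ := by
  unfold srel
  rw [sB_mdl H (ψ := fun k => ∃ m, k = (ts.s + 4) * m ∧ x = en m ∧ y = (en m).map Nat.succ)]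
  · constructor
    · rintro ⟨i, k, h1, -, m, -, rfl, rfl⟩
      exact ⟨⟨i, h1⟩, rfl⟩
    · rintro ⟨⟨i, hi⟩, rfl⟩
      obtain ⟨m, hm, rfl⟩ := en_surj x (i + 1)
      refine ⟨i, (ts.s + 4) * m, hi, ?_, m, rfl, rfl, rfl⟩
      nlinarith
  · intro u k hk
    rw [sbeta_mdl H _ (by omega), sbeta_mdl H _ (by omega)]
    have c1 : ∀ m, code ts f (ts.s + 1) m x ↔ x = en m := by intro m; simp [code]
    have c2 : ∀ m, code ts f (ts.s + 2) m y ↔ y = (en m).map Nat.succ := by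
      intro m; simp [code]
    simp only [c1, c2]
    have key : ∀ m, (At lt c u (2 * ((ts.s + 4) * m)) ∨
        At lt c u (2 * ((ts.s + 4) * m) + 1)) → k = (ts.s + 4) * m := by
      rintro m (h | h)
      · have := hk.uniq h; omega
      · have := hk.uniq h; omega
    constructor
    · rintro ⟨⟨m, h1, h2⟩, m', h3, h4⟩
      have e1 := key _ h1
      have e2 := key _ h3
      have : m = m' := Nat.eq_of_mul_eq_mul_left (by omega : 0 < ts.s + 4) (e1.symm.trans e2)
      subst this
      exact ⟨m, e1, h2, h4⟩
    · rintro ⟨m, rfl, h2, h3⟩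
      exact ⟨⟨m, Or.inl hk, h2⟩, m, Or.inl hk, h3⟩

/-- Tiles at a world of the model. -/
theorem tile_mdl (H : Hyp lt c R) (t : Fin (ts.s + 1)) (x : Option ℕ) (w : W) :
    sbeta (mdl lt c R ts f) t x w ↔ ∃ m a, (At lt c w (2 * ((ts.s + 4) * m)) ∨
      At lt c w (2 * ((ts.s + 4) * m) + 1)) ∧ x = some a ∧ f a m = t := by
  rw [sbeta_mdl H _ (by omega)]
  simp only [code_tile]
  constructor
  · rintro ⟨m, h, a, h1, h2⟩
    exact ⟨m, a, h, h1, h2⟩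
  · rintro ⟨m, a, h, h1, h2⟩
    exact ⟨m, h, a, h1, h2⟩

theorem block_uniq {w : W} {m m' : ℕ}
    (h : At lt c w (2 * ((ts.s + 4) * m)) ∨ At lt c w (2 * ((ts.s + 4) * m) + 1))
    (h' : At lt c w (2 * ((ts.s + 4) * m')) ∨ At lt c w (2 * ((ts.s + 4) * m') + 1)) :
    m = m' := by
  refine Nat.eq_of_mul_eq_mul_left (by omega : 0 < ts.s + 4) ?_
  rcases h with h | h <;> rcases h' with h' | h' <;> have := h.uniq h' <;> omega

/-- The constructed model satisfies `B⁺` at `c 0`. -/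
theorem SemB_mdl (H : Hyp lt c R) (h1 : ts.T1 f) (h2 : ts.T2 f) :
    SemB (mdl lt c R ts f) (c 0) := by
  have hc0 := At_chain H.irr H.trans H.chain 0
  refine ⟨⟨(none : Option ℕ), trivial, ?_⟩, ⟨(some 0 : Option ℕ), trivial, ⟨f 0 0, ?_⟩, ?_⟩,
    ?_, ?_, ?_, ?_, ?_, ?_, ?_⟩
  · intro v _ t h
    rw [tile_mdl H] at h
    obtain ⟨m, a, -, h, -⟩ := h
    cases h
  · rw [tile_mdl H]
    exact ⟨0, 0, Or.inl hc0, rfl, rfl⟩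
  · rw [sM_some]; exact hc0
  · intro a _
    exact ⟨Option.map Nat.succ a, trivial, (srel_mdl H _ _ _).2 ⟨⟨0, hc0⟩, rfl⟩⟩
  · rintro a _ b _ hab v _ ⟨d, -, hd⟩
    rw [srel_mdl H] at hab ⊢
    obtain ⟨m, hm⟩ := sq_mdl.1 hd.1
    exact ⟨⟨_, hm⟩, hab.2⟩
  · intro a _ b _ hab v _
    rw [srel_mdl H] at hab
    obtain ⟨-, rfl⟩ := hab
    change Option ℕ at a
    cases a with
    | none =>
      constructor
      · intro h; exact absurd h sM_none
      · rintro ⟨-, h, -⟩; exact absurd h (sBN_none _ _)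
    | some n =>
      have hX : (ts.s + 4) * (n + 1) = (ts.s + 4) * n + (ts.s + 4) := by ring
      show _ ↔ ¬ _ ∧ sBN (mdl lt c R ts f) (ts.s + 4) (sM (mdl lt c R ts f) (some (n + 1) : Option ℕ)) v ∧
        ¬ sBN (mdl lt c R ts f) (ts.s + 5) (sM (mdl lt c R ts f) (some (n + 1) : Option ℕ)) v
      rw [sM_some, sp_mdl, not_not, sBN_some H, sBN_some H, hX]
      generalize (ts.s + 4) * n = X
      constructor
      · intro h
        refine ⟨⟨_, h⟩, ⟨_, h, by omega⟩, ?_⟩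
        rintro ⟨i, hi, hlt⟩
        have := hi.uniq h
        omega
      · rintro ⟨⟨k, hk⟩, ⟨i, hi, hlt⟩, hn⟩
        have e := hi.uniq hk
        have : 2 * X = 2 * k := by
          by_contra hne
          exact hn ⟨_, hk, by omega⟩
        rw [this]; exact hk
  · rintro a _ b _ v _ t ⟨hM, ht⟩ u _ hMu
    change Option ℕ at a
    cases a with
    | none => exact absurd hM sM_none
    | some n =>
      rw [sM_some] at hM hMu
      rw [tile_mdl H] at ht ⊢
      obtain ⟨m, e, hm, hb, hf⟩ := ht
      have := block_uniq hm (Or.inl hM)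
      subst this
      exact ⟨m, e, Or.inl hMu, hb, hf⟩
  · intro a _ v _ t ht t' hne ht'
    rw [tile_mdl H] at ht ht'
    obtain ⟨m, e, hm, rfl, hf⟩ := ht
    obtain ⟨m', e', hm', hb', hf'⟩ := ht'
    have := block_uniq hm hm'
    subst this
    cases hb'
    exact hne (hf'.symm.trans hf)
  · rintro a _ b _ v _ t ⟨hr, ht⟩
    rw [srel_mdl H] at hr
    rw [tile_mdl H] at ht
    obtain ⟨m, e, hm, rfl, rfl⟩ := ht
    refine ⟨f (e + 1) m, h1 e m, ?_⟩
    rw [tile_mdl H]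
    exact ⟨m, e + 1, hm, hr.2, rfl⟩
  · rintro a _ b _ v _ t ⟨hM, ht⟩ u _ ⟨d, -, hr, hd⟩
    rw [srel_mdl H] at hr
    change Option ℕ at a
    cases a with
    | none => exact absurd hM sM_none
    | some n =>
      obtain ⟨-, rfl⟩ := hr
      rw [sM_some] at hM
      have hd' : sM (mdl lt c R ts f) (some (n + 1) : Option ℕ) u := hd
      rw [sM_some] at hd'
      rw [tile_mdl H] at ht
      obtain ⟨m, e, hm, rfl, rfl⟩ := ht
      have := block_uniq hm (Or.inl hM)
      subst this
      refine ⟨f e (m + 1), h2 e m, ?_⟩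
      rw [tile_mdl H]
      exact ⟨m + 1, e, Or.inl hd', rfl, rfl⟩

end Construction


/-- let `⟨W,<⟩` be a strict linear order containing an infinite ascending
chain of pairwise distinct elements, `≤` its reflexive closure, `R` a relation with
`< ⊆ R ⊆ ≤`, and `L` a set of formulas with `L(W,R) ⊆ L ⊆ L_c(W,R)`. Then `¬B⁺ ∈ L`
iff there is no function `f : ℕ×ℕ → T` satisfying (T1) and (T2). -/
theorem statement12 (W : Type*) (lt : W → W → Prop)
    (hirr : ∀ a, ¬ lt a a)
    (htrans : ∀ a b c, lt a b → lt b c → lt a c)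
    (htotal : ∀ a b, a ≠ b → lt a b ∨ lt b a)
    (c : ℕ → W) (hchain : ∀ n, lt (c n) (c (n + 1))) (hinj : Function.Injective c)
    (R : W → W → Prop)
    (hR1 : ∀ a b, lt a b → R a b) (hR2 : ∀ a b, R a b → lt a b ∨ a = b)
    (ts : TileSet) (L : Set (Fml (Letter ts.s)))
    (hL1 : ∀ φ : Fml (Letter ts.s), ValidOn R φ → φ ∈ L)
    (hL2 : ∀ φ ∈ L, ValidOnC R φ) :
    Fml.neg (Bplus ts) ∈ L ↔
      ¬ ∃ f : ℕ → ℕ → Fin (ts.s + 1), ts.T1 f ∧ ts.T2 f := by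
  have H : Hyp lt c R := ⟨hirr, htrans, hchain, hR1, hR2⟩
  constructor
  · rintro hmem ⟨f, h1, h2⟩
    have := hL2 _ hmem (mdl lt c R ts f) (fun _ _ => rfl) (c 0) (fun _ => (none : Option ℕ))
      (fun _ => trivial)
    exact this ((tp_Bstar (mdl lt c R ts f) (c 0) _).2 (SemB_mdl H h1 h2))
  · intro hno
    apply hL1
    intro K w g _ hB
    apply hno
    refine tiling_of_SemB K ?_ w ((tp_Bstar K w g).1 hB)
    rintro a b d (rfl | hab) hbd
    · exact hbd
    · rcases hR2 _ _ hab with hab' | rfl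
      · rcases hbd with rfl | hbd
        · exact Or.inr hab
        · rcases hR2 _ _ hbd with hbd' | rfl
          · exact Or.inr (hR1 _ _ (htrans _ _ _ hab' hbd'))
          · exact Or.inr hab
      · exact hbd

end FOML
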